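/- Fix 1 < p < ∞, κ ∈ ℝ, and D > 0. Let μ_p(κ,D) denote the infimum of (∫_{-D/2}^{D/2} |φ′(s)|^p e^{-κ s²/2} ds)/(∫_{-D/2}^{D/2} |φ(s)|^p e^{-κ s²/2} ds) over all Lipschitz functions φ : [-D/2, D/2] → ℝ that are not identically zero and satisfy ∫_{-D/2}^{D/2} |φ(s)|^{p-2} φ(s) e^{-κ s²/2} ds = 0, where φ′ is the almost-everywhere derivative. Then there exists an odd C¹ function φ : [-D/2, D/2] → ℝ, not identically zero, such that: (i) the map t ↦ e^{-κ t²/2} |φ′(t)|^{p-2} φ′(t) is differentiable on (-D/2, D/2) with derivative equal to -μ_p(κ,D) e^{-κ t²/2} |φ(t)|^{p-2} φ(t); (ii) φ(0) = 0, φ(t) > 0 for t ∈ (0, D/2], φ′(t) > 0 for t ∈ (0, D/2), and φ′(D/2) = 0; (iii) φ is admissible for the infimum defining μ_p(κ,D) and realizes it (its Rayleigh quotient equals μ_p(κ,D)). -/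

import Mathlib

/-- The odd power function `sgnPow q x = sign x * |x| ^ q` (with value `0` at `0`);
for `q = p - 1` this is the function usually written `|x|^{p-2} x`. -/
noncomputable def sgnPow (q x : ℝ) : ℝ := Real.sign x * |x| ^ q

/-- The first nonzero Neumann eigenvalue `μ_p(κ, D)` of the one-dimensional weighted
`p`-Laplacian on `[-D/2, D/2]`, defined variationally. -/
noncomputable def rayleighNeumann (p κ D : ℝ) : ℝ :=
  sInf { r : ℝ | ∃ φ : ℝ → ℝ,
    (∃ K : NNReal, LipschitzOnWith K φ (Set.Icc (-(D / 2)) (D / 2))) ∧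
    ¬ (∀ s ∈ Set.Icc (-(D / 2)) (D / 2), φ s = 0) ∧
    (∫ s in (-(D / 2))..(D / 2), sgnPow (p - 1) (φ s) * Real.exp (-κ * s ^ 2 / 2)) = 0 ∧
    r = (∫ s in (-(D / 2))..(D / 2), |deriv φ s| ^ p * Real.exp (-κ * s ^ 2 / 2)) /
        (∫ s in (-(D / 2))..(D / 2), |φ s| ^ p * Real.exp (-κ * s ^ 2 / 2)) }

open Set Filter Topology MeasureTheory

/-- The flux `s ↦ w(s)⁻¹ ∫_s^L w f^q` attached to a source `f`. -/
noncomputable def weightedFlux (w : ℝ → ℝ) (q L : ℝ) (f : ℝ → ℝ) (s : ℝ) : ℝ :=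
  (w s)⁻¹ * ∫ x in s..L, w x * f x ^ q

/-- The operator sending `f` to the `u` with `u(0) = 0` whose derivative to the power `q` is the
flux of `f`. -/
noncomputable def halfSolution (w : ℝ → ℝ) (q L : ℝ) (f : ℝ → ℝ) (t : ℝ) : ℝ :=
  ∫ s in (0 : ℝ)..t, weightedFlux w q L f s ^ (1 / q)

section HalfProblem

variable {w : ℝ → ℝ} {q L : ℝ} {f g : ℝ → ℝ}

theorem continuous_weightedFlux (hw : Continuous w) (hw0 : ∀ x, 0 < w x) (hq : 0 < q)
    (hf : Continuous f) : Continuous (weightedFlux w q L f) := by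
  have h1 : Continuous fun x => w x * f x ^ q :=
    hw.mul (hf.rpow_const fun _ => Or.inr hq.le)
  have h2 : Continuous fun s => ∫ x in s..L, w x * f x ^ q := by
    have := intervalIntegral.continuous_primitive (μ := volume)
      (fun a b => h1.intervalIntegrable a b) L
    simp_rw [fun s => intervalIntegral.integral_symm (μ := volume)
      (f := fun x => w x * f x ^ q) L s]
    exact this.neg
  exact (hw.inv₀ fun x => (hw0 x).ne').mul h2

theorem continuous_weightedFlux_rpow (hw : Continuous w) (hw0 : ∀ x, 0 < w x) (hq : 0 < q)
    (hf : Continuous f) : Continuous fun s => weightedFlux w q L f s ^ (1 / q) :=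
  (continuous_weightedFlux hw hw0 hq hf).rpow_const fun _ => Or.inr (by positivity)

theorem continuous_halfSolution (hw : Continuous w) (hw0 : ∀ x, 0 < w x) (hq : 0 < q)
    (hf : Continuous f) : Continuous (halfSolution w q L f) :=
  intervalIntegral.continuous_primitive
    (fun a b => (continuous_weightedFlux_rpow hw hw0 hq hf).intervalIntegrable a b) 0

theorem weightedFlux_nonneg (hw0 : ∀ x, 0 < w x) (hf0 : ∀ t ∈ Icc 0 L, 0 ≤ f t) {s : ℝ}
    (hs : s ∈ Icc 0 L) : 0 ≤ weightedFlux w q L f s := by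
  refine mul_nonneg (inv_nonneg.2 (hw0 s).le) (intervalIntegral.integral_nonneg hs.2 ?_)
  intro x hx
  exact mul_nonneg (hw0 x).le (Real.rpow_nonneg (hf0 x ⟨hs.1.trans hx.1, hx.2⟩) _)

theorem weightedFlux_mono (hw : Continuous w) (hw0 : ∀ x, 0 < w x) (hq : 0 < q)
    (hf : Continuous f) (hg : Continuous g) (hf0 : ∀ t ∈ Icc 0 L, 0 ≤ f t)
    (hfg : ∀ t ∈ Icc 0 L, f t ≤ g t) {s : ℝ} (hs : s ∈ Icc 0 L) :
    weightedFlux w q L f s ≤ weightedFlux w q L g s := by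
  refine mul_le_mul_of_nonneg_left ?_ (inv_nonneg.2 (hw0 s).le)
  refine intervalIntegral.integral_mono_on hs.2
    ((hw.mul (hf.rpow_const fun _ => Or.inr hq.le)).intervalIntegrable _ _)
    ((hw.mul (hg.rpow_const fun _ => Or.inr hq.le)).intervalIntegrable _ _) ?_
  intro x hx
  have hx' : x ∈ Icc 0 L := ⟨hs.1.trans hx.1, hx.2⟩
  exact mul_le_mul_of_nonneg_left (Real.rpow_le_rpow (hf0 x hx') (hfg x hx') hq.le) (hw0 x).le

theorem weightedFlux_zero_lt (hw : Continuous w) (hw0 : ∀ x, 0 < w x) (hq : 0 < q) (hL : 0 < L)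
    (hf : Continuous f) (hg : Continuous g) (hf0 : ∀ t ∈ Icc 0 L, 0 ≤ f t)
    (hfg : ∀ t ∈ Icc 0 L, f t ≤ g t) (hlt : ∃ t ∈ Icc 0 L, f t < g t) :
    weightedFlux w q L f 0 < weightedFlux w q L g 0 := by
  refine mul_lt_mul_of_pos_left ?_ (inv_pos.2 (hw0 0))
  refine intervalIntegral.integral_lt_integral_of_continuousOn_of_le_of_exists_lt hL
    (hw.mul (hf.rpow_const fun _ => Or.inr hq.le)).continuousOn
    (hw.mul (hg.rpow_const fun _ => Or.inr hq.le)).continuousOn ?_ ?_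
  · intro x hx
    have hx' : x ∈ Icc 0 L := Ioc_subset_Icc_self hx
    exact mul_le_mul_of_nonneg_left (Real.rpow_le_rpow (hf0 x hx') (hfg x hx') hq.le) (hw0 x).le
  · obtain ⟨t, ht, h⟩ := hlt
    exact ⟨t, ht, mul_lt_mul_of_pos_left (Real.rpow_lt_rpow (hf0 t ht) h hq) (hw0 t)⟩

theorem weightedFlux_const_mul {c : ℝ} (hc : 0 ≤ c) (hf0 : ∀ t ∈ Icc 0 L, 0 ≤ f t) {s : ℝ}
    (hs : s ∈ Icc 0 L) :
    weightedFlux w q L (fun x => c * f x) s = c ^ q * weightedFlux w q L f s := by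
  unfold weightedFlux
  rw [mul_left_comm, ← intervalIntegral.integral_const_mul (c ^ q)]
  congr 1
  refine intervalIntegral.integral_congr fun x hx => ?_
  rw [uIcc_of_le hs.2] at hx
  simp only [Real.mul_rpow hc (hf0 x ⟨hs.1.trans hx.1, hx.2⟩)]
  ring

theorem halfSolution_const_mul (hw0 : ∀ x, 0 < w x) (hq : 0 < q) {c : ℝ} (hc : 0 ≤ c)
    (hf0 : ∀ t ∈ Icc 0 L, 0 ≤ f t) {t : ℝ} (ht : t ∈ Icc 0 L) :
    halfSolution w q L (fun x => c * f x) t = c * halfSolution w q L f t := by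
  unfold halfSolution
  rw [← intervalIntegral.integral_const_mul]
  refine intervalIntegral.integral_congr fun x hx => ?_
  rw [uIcc_of_le ht.1] at hx
  have hx' : x ∈ Icc 0 L := ⟨hx.1, hx.2.trans ht.2⟩
  simp only [weightedFlux_const_mul hc hf0 hx']
  rw [Real.mul_rpow (Real.rpow_nonneg hc _) (weightedFlux_nonneg hw0 hf0 hx'),
    ← Real.rpow_mul hc, mul_one_div_cancel hq.ne', Real.rpow_one]

theorem halfSolution_mono (hw : Continuous w) (hw0 : ∀ x, 0 < w x) (hq : 0 < q)
    (hf : Continuous f) (hg : Continuous g) (hf0 : ∀ t ∈ Icc 0 L, 0 ≤ f t)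
    (hfg : ∀ t ∈ Icc 0 L, f t ≤ g t) {t : ℝ} (ht : t ∈ Icc 0 L) :
    halfSolution w q L f t ≤ halfSolution w q L g t := by
  refine intervalIntegral.integral_mono_on ht.1
    ((continuous_weightedFlux_rpow hw hw0 hq hf).intervalIntegrable _ _)
    ((continuous_weightedFlux_rpow hw hw0 hq hg).intervalIntegrable _ _) fun s hs => ?_
  have hs' : s ∈ Icc 0 L := ⟨hs.1, hs.2.trans ht.2⟩
  exact Real.rpow_le_rpow (weightedFlux_nonneg hw0 hf0 hs')
    (weightedFlux_mono hw hw0 hq hf hg hf0 hfg hs') (by positivity)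

theorem halfSolution_monotoneOn (hw : Continuous w) (hw0 : ∀ x, 0 < w x) (hq : 0 < q)
    (hf : Continuous f) (hf0 : ∀ t ∈ Icc 0 L, 0 ≤ f t) {s t : ℝ} (hs : 0 ≤ s) (hst : s ≤ t)
    (ht : t ≤ L) : halfSolution w q L f s ≤ halfSolution w q L f t := by
  have hi := fun a b => (continuous_weightedFlux_rpow (L := L) hw hw0 hq hf).intervalIntegrable
    (μ := volume) a b
  have h := intervalIntegral.integral_interval_sub_left (hi 0 t) (hi 0 s)
  have : 0 ≤ ∫ x in s..t, weightedFlux w q L f x ^ (1 / q) :=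
    intervalIntegral.integral_nonneg hst fun x hx =>
      Real.rpow_nonneg (weightedFlux_nonneg hw0 hf0 ⟨hs.trans hx.1, hx.2.trans ht⟩) _
  unfold halfSolution
  linarith

theorem halfSolution_nonneg (hw0 : ∀ x, 0 < w x)
    (hf0 : ∀ t ∈ Icc 0 L, 0 ≤ f t) {t : ℝ} (ht : t ∈ Icc 0 L) :
    0 ≤ halfSolution w q L f t :=
  intervalIntegral.integral_nonneg ht.1 fun _ hx =>
    Real.rpow_nonneg (weightedFlux_nonneg hw0 hf0 ⟨hx.1, hx.2.trans ht.2⟩) _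

theorem exists_linear_le_integral (hL : 0 < L) {G : ℝ → ℝ} (hG : Continuous G)
    (hG0 : ∀ t ∈ Icc 0 L, 0 ≤ G t) (hpos : 0 < G 0) :
    ∃ ε > 0, ∀ t ∈ Icc 0 L, ε * t ≤ ∫ s in (0 : ℝ)..t, G s := by
  have hev : ∀ᶠ s in 𝓝 (0 : ℝ), G 0 / 2 < G s :=
    hG.continuousAt.eventually (lt_mem_nhds (by linarith))
  obtain ⟨δ, hδ, hball⟩ := Metric.eventually_nhds_iff.1 hev
  set d := min (δ / 2) L with hd
  have hd0 : 0 < d := lt_min (by linarith) hL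
  have hdL : d ≤ L := min_le_right _ _
  have hsmall : ∀ s ∈ Icc 0 d, G 0 / 2 ≤ G s := by
    intro s hs
    refine (hball ?_).le
    rw [Real.dist_eq, sub_zero, abs_of_nonneg hs.1]
    have := min_le_left (δ / 2) L
    linarith [hs.2]
  have hlow : ∀ t ∈ Icc 0 d, G 0 / 2 * t ≤ ∫ s in (0 : ℝ)..t, G s := by
    intro t ht
    have := intervalIntegral.integral_mono_on (μ := volume) (f := fun _ => G 0 / 2) (g := G) ht.1
      (by simp) (hG.intervalIntegrable _ _) fun s hs => hsmall s ⟨hs.1, hs.2.trans ht.2⟩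
    rw [intervalIntegral.integral_const, smul_eq_mul] at this
    linarith
  refine ⟨G 0 / 2 * (d / L), by positivity, fun t ht => ?_⟩
  rcases le_total t d with h | h
  · refine le_trans ?_ (hlow t ⟨ht.1, h⟩)
    have : d / L ≤ 1 := (div_le_one hL).2 hdL
    have := mul_le_mul_of_nonneg_left this (by linarith : 0 ≤ G 0 / 2)
    exact mul_le_mul_of_nonneg_right (by linarith) ht.1
  · have h1 := hlow d ⟨hd0.le, le_rfl⟩
    have h2 := intervalIntegral.integral_interval_sub_left (μ := volume)
      (hG.intervalIntegrable 0 t) (hG.intervalIntegrable 0 d)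
    have h3 : 0 ≤ ∫ x in d..t, G x :=
      intervalIntegral.integral_nonneg h fun x hx => hG0 x ⟨hd0.le.trans hx.1, hx.2.trans ht.2⟩
    have h4 : d / L * t ≤ d := by
      rw [div_mul_eq_mul_div, div_le_iff₀ hL]
      exact mul_le_mul_of_nonneg_left ht.2 hd0.le
    have h5 := mul_le_mul_of_nonneg_left h4 (by linarith : 0 ≤ G 0 / 2)
    linarith

theorem exists_integral_le_linear {G : ℝ → ℝ} (hG : Continuous G) :
    ∃ M > 0, ∀ s ∈ Icc 0 L, ∀ t ∈ Icc 0 L, s ≤ t → ∫ x in s..t, G x ≤ M * (t - s) := by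
  obtain ⟨C, hC⟩ := (isCompact_Icc (a := (0 : ℝ)) (b := L)).exists_bound_of_continuousOn
    hG.continuousOn
  refine ⟨max C 1, by positivity, fun s hs t ht hst => ?_⟩
  have := intervalIntegral.integral_mono_on (μ := volume) (f := G) (g := fun _ => max C 1) hst
      (hG.intervalIntegrable _ _) (by simp)
      fun x hx => ((le_abs_self _).trans (hC x ⟨hs.1.trans hx.1, hx.2.trans ht.2⟩)).trans
        (le_max_left _ _)
  simpa [mul_comm] using this

theorem tendsto_halfSolution (hw : Continuous w) (hw0 : ∀ x, 0 < w x) (hq : 0 < q)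
    {F : ℕ → ℝ → ℝ} {C : ℝ} (hF : ∀ n, Continuous (F n))
    (hF0 : ∀ n, ∀ t ∈ Icc 0 L, 0 ≤ F n t) (hFC : ∀ n, ∀ t ∈ Icc 0 L, F n t ≤ C)
    (hlim : ∀ t ∈ Icc 0 L, Tendsto (fun n => F n t) atTop (𝓝 (f t))) {t : ℝ}
    (ht : t ∈ Icc 0 L) :
    Tendsto (fun n => halfSolution w q L (F n) t) atTop (𝓝 (halfSolution w q L f t)) := by
  have hflux : ∀ s ∈ Icc 0 L,
      Tendsto (fun n => weightedFlux w q L (F n) s) atTop (𝓝 (weightedFlux w q L f s)) := by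
    intro s hs
    refine Tendsto.const_mul _ ?_
    refine intervalIntegral.tendsto_integral_filter_of_dominated_convergence
      (fun x => w x * C ^ q) (Eventually.of_forall fun n =>
        (hw.mul ((hF n).rpow_const fun _ => Or.inr hq.le)).aestronglyMeasurable)
      (Eventually.of_forall fun n => ae_of_all _ fun x hx => ?_)
      ((hw.mul continuous_const).intervalIntegrable _ _)
      (ae_of_all _ fun x hx => ?_)
    · rw [uIoc_of_le hs.2] at hx
      have hx' : x ∈ Icc 0 L := ⟨hs.1.trans hx.1.le, hx.2⟩
      rw [Real.norm_of_nonneg (mul_nonneg (hw0 x).le (Real.rpow_nonneg (hF0 n x hx') _))]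
      exact mul_le_mul_of_nonneg_left
        (Real.rpow_le_rpow (hF0 n x hx') (hFC n x hx') hq.le) (hw0 x).le
    · rw [uIoc_of_le hs.2] at hx
      exact ((hlim x ⟨hs.1.trans hx.1.le, hx.2⟩).rpow_const (Or.inr hq.le)).const_mul _
  refine intervalIntegral.tendsto_integral_filter_of_dominated_convergence
    (fun s => weightedFlux w q L (fun _ => C) s ^ (1 / q)) (Eventually.of_forall fun n =>
      (continuous_weightedFlux_rpow hw hw0 hq (hF n)).aestronglyMeasurable)
    (Eventually.of_forall fun n => ae_of_all _ fun s hs => ?_)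
    ((continuous_weightedFlux_rpow hw hw0 hq continuous_const).intervalIntegrable _ _)
    (ae_of_all _ fun s hs => ?_)
  · rw [uIoc_of_le ht.1] at hs
    have hs' : s ∈ Icc 0 L := ⟨hs.1.le, hs.2.trans ht.2⟩
    have h0 := weightedFlux_nonneg (q := q) hw0 (hF0 n) hs'
    rw [Real.norm_of_nonneg (Real.rpow_nonneg h0 _)]
    exact Real.rpow_le_rpow h0
      (weightedFlux_mono hw hw0 hq (hF n) continuous_const (hF0 n) (hFC n) hs') (by positivity)
  · rw [uIoc_of_le ht.1] at hs
    exact (hflux s ⟨hs.1.le, hs.2.trans ht.2⟩).rpow_const (Or.inr (by positivity))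

/-- Sequential Arzelà–Ascoli for uniformly bounded and uniformly Lipschitz functions. -/
theorem exists_subseq_tendsto_of_lipschitz (hL : 0 ≤ L) {G : ℕ → ℝ → ℝ} {M : NNReal} {C : ℝ}
    (hlip : ∀ n, LipschitzOnWith M (G n) (Icc 0 L)) (hG0 : ∀ n, ∀ t ∈ Icc 0 L, 0 ≤ G n t)
    (hGC : ∀ n, ∀ t ∈ Icc 0 L, G n t ≤ C) :
    ∃ g : ℝ → ℝ, Continuous g ∧ ∃ φ : ℕ → ℕ, StrictMono φ ∧
      ∀ t ∈ Icc 0 L, Tendsto (fun n => G (φ n) t) atTop (𝓝 (g t)) := by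
  let B : ℕ → BoundedContinuousFunction (Icc 0 L) ℝ := fun n =>
    BoundedContinuousFunction.mkOfCompact ⟨fun x => G n x, (hlip n).to_restrict.continuous⟩
  have hcomp : IsCompact (closure (range B)) := by
    refine BoundedContinuousFunction.arzela_ascoli (Icc 0 C) isCompact_Icc _ ?_ ?_
    · rintro f x ⟨n, rfl⟩
      exact ⟨hG0 n x x.2, hGC n x x.2⟩
    · refine (LipschitzWith.uniformEquicontinuous _ M ?_).equicontinuous
      rintro ⟨f, n, rfl⟩
      exact (hlip n).to_restrict
  obtain ⟨b, -, φ, hφ, hlim⟩ := hcomp.tendsto_subseq fun n => subset_closure (mem_range_self n)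
  refine ⟨IccExtend hL b, b.continuous.Icc_extend', φ, hφ, fun t ht => ?_⟩
  rw [IccExtend_of_mem hL b ht]
  exact ((continuous_eval_const (F := BoundedContinuousFunction (Icc 0 L) ℝ)
    (⟨t, ht⟩ : Icc 0 L)).tendsto b).comp hlim

end HalfProblem

section Eigen

variable {w : ℝ → ℝ} {q L : ℝ}

theorem exists_halfSolution_lipschitz (hw : Continuous w) (hw0 : ∀ x, 0 < w x) (hq : 0 < q)
    (C : ℝ) : ∃ M : NNReal, ∀ f : ℝ → ℝ, Continuous f → (∀ t ∈ Icc 0 L, 0 ≤ f t) →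
      (∀ t ∈ Icc 0 L, f t ≤ C) → LipschitzOnWith M (halfSolution w q L f) (Icc 0 L) := by
  obtain ⟨M, hM, hMle⟩ := exists_integral_le_linear (L := L)
    (continuous_weightedFlux_rpow (L := L) hw hw0 hq (continuous_const (y := C)))
  refine ⟨⟨M, hM.le⟩, fun f hf hf0 hfC => ?_⟩
  have key : ∀ s ∈ Icc 0 L, ∀ t ∈ Icc 0 L, s ≤ t →
      halfSolution w q L f t ≤ halfSolution w q L f s + M * |t - s| := by
    intro s hs t ht hst
    have hi := fun a b => (continuous_weightedFlux_rpow (L := L) hw hw0 hq hf).intervalIntegrable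
      (μ := volume) a b
    have h := intervalIntegral.integral_interval_sub_left (hi 0 t) (hi 0 s)
    have h2 : ∫ x in s..t, weightedFlux w q L f x ^ (1 / q) ≤
        ∫ x in s..t, weightedFlux w q L (fun _ => C) x ^ (1 / q) := by
      refine intervalIntegral.integral_mono_on hst (hi _ _)
        ((continuous_weightedFlux_rpow hw hw0 hq continuous_const).intervalIntegrable _ _)
        fun x hx => ?_
      have hx' : x ∈ Icc 0 L := ⟨hs.1.trans hx.1, hx.2.trans ht.2⟩
      exact Real.rpow_le_rpow (weightedFlux_nonneg hw0 hf0 hx')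
        (weightedFlux_mono hw hw0 hq hf continuous_const hf0 hfC hx') (by positivity)
    have h3 := hMle s hs t ht hst
    rw [abs_of_nonneg (by linarith)]
    unfold halfSolution
    linarith
  refine LipschitzOnWith.of_le_add_mul _ fun s hs t ht => ?_
  rw [Real.dist_eq]
  rcases le_total t s with h | h
  · exact key t ht s hs h
  · have h1 := halfSolution_monotoneOn hw hw0 hq hf hf0 hs.1 h ht.2
    have h2 : 0 ≤ M * |s - t| := by positivity
    exact h1.trans (le_add_of_nonneg_right h2)

/-- Normalised nonnegative functions `f` with `c * f` below the solution operator at `f`. -/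
def IsSubeigen (w : ℝ → ℝ) (q L c : ℝ) (f : ℝ → ℝ) : Prop :=
  Continuous f ∧ (∀ t ∈ Icc 0 L, 0 ≤ f t) ∧ (∀ t ∈ Icc 0 L, f t ≤ 1) ∧ f L = 1 ∧
    ∀ t ∈ Icc 0 L, c * f t ≤ halfSolution w q L f t

theorem exists_isSubeigen_of_halfSolution (hw : Continuous w) (hw0 : ∀ x, 0 < w x) (hq : 0 < q)
    {f : ℝ → ℝ} {c : ℝ} (hf : Continuous f) (hf0 : ∀ t ∈ Icc 0 L, 0 ≤ f t)
    (hpos : 0 < halfSolution w q L f L)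
    (hc : ∀ t ∈ Icc 0 L,
      c * halfSolution w q L f t ≤ halfSolution w q L (halfSolution w q L f) t) :
    ∃ g, IsSubeigen w q L c g := by
  set u := halfSolution w q L f with hu
  have hu0 : ∀ t ∈ Icc 0 L, 0 ≤ u t := fun t ht => halfSolution_nonneg hw0 hf0 ht
  have huc : Continuous u := continuous_halfSolution hw hw0 hq hf
  refine ⟨fun t => (u L)⁻¹ * u t, continuous_const.mul huc,
    fun t ht => mul_nonneg (inv_nonneg.2 hpos.le) (hu0 t ht), fun t ht => ?_,
    inv_mul_cancel₀ hpos.ne', fun t ht => ?_⟩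
  · rw [inv_mul_le_iff₀ hpos, mul_one]
    exact halfSolution_monotoneOn hw hw0 hq hf hf0 ht.1 ht.2 le_rfl
  · rw [halfSolution_const_mul hw0 hq (inv_nonneg.2 hpos.le) hu0 ht, mul_left_comm]
    exact mul_le_mul_of_nonneg_left (hc t ht) (inv_nonneg.2 hpos.le)

theorem exists_linear_le_halfSolution (hw : Continuous w) (hw0 : ∀ x, 0 < w x) (hq : 0 < q)
    (hL : 0 < L) {f : ℝ → ℝ} (hf : Continuous f) (hf0 : ∀ t ∈ Icc 0 L, 0 ≤ f t)
    (hpos : ∃ t ∈ Icc 0 L, 0 < f t) :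
    ∃ ε > 0, ∀ t ∈ Icc 0 L, ε * t ≤ halfSolution w q L f t := by
  refine exists_linear_le_integral hL (continuous_weightedFlux_rpow hw hw0 hq hf)
    (fun t ht => Real.rpow_nonneg (weightedFlux_nonneg hw0 hf0 ht) _) ?_
  refine Real.rpow_pos_of_pos ?_ _
  exact (weightedFlux_nonneg hw0 (f := fun _ => 0) (fun _ _ => le_rfl)
    (left_mem_Icc.2 hL.le)).trans_lt
    (weightedFlux_zero_lt hw hw0 hq hL continuous_const hf (fun _ _ => le_rfl) hf0 hpos)

/-- Existence of a positive eigenfunction of the (nonlinear) solution operator. -/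
theorem exists_halfSolution_eigenfunction (hw : Continuous w) (hw0 : ∀ x, 0 < w x) (hq : 0 < q)
    (hL : 0 < L) : ∃ c > 0, ∃ g : ℝ → ℝ, Continuous g ∧ (∀ t ∈ Ioc 0 L, 0 < g t) ∧
      ∀ t ∈ Icc 0 L, halfSolution w q L g t = c * g t := by
  have hLmem : L ∈ Icc 0 L := right_mem_Icc.2 hL.le
  set S : Set ℝ := {c | ∃ f, IsSubeigen w q L c f} with hS
  set C := halfSolution w q L (fun _ => 1) L with hC
  have hTC : ∀ f, Continuous f → (∀ t ∈ Icc 0 L, 0 ≤ f t) → (∀ t ∈ Icc 0 L, f t ≤ 1) →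
      ∀ t ∈ Icc 0 L, halfSolution w q L f t ≤ C := fun f hf hf0 hf1 t ht =>
    (halfSolution_mono hw hw0 hq hf continuous_const hf0 hf1 ht).trans
      (halfSolution_monotoneOn hw hw0 hq continuous_const (fun _ _ => zero_le_one) ht.1 ht.2 le_rfl)
  have hbdd : BddAbove S := by
    refine ⟨C, ?_⟩
    rintro c ⟨f, hf, hf0, hf1, hfL, hc⟩
    have h := hc L hLmem
    rw [hfL, mul_one] at h
    exact h.trans (hTC f hf hf0 hf1 L hLmem)
  have hpos : ∃ c ∈ S, 0 < c := by
    have hid : Continuous fun t : ℝ => L⁻¹ * t := by fun_prop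
    have hid0 : ∀ t ∈ Icc 0 L, 0 ≤ L⁻¹ * t := fun t ht =>
      mul_nonneg (inv_nonneg.2 hL.le) ht.1
    obtain ⟨ε, hε, h⟩ := exists_linear_le_halfSolution hw hw0 hq hL hid hid0
      ⟨L, hLmem, by positivity⟩
    refine ⟨ε * L, ⟨_, hid, hid0, fun t ht => ?_, inv_mul_cancel₀ hL.ne', fun t ht => ?_⟩,
      by positivity⟩
    · rw [inv_mul_le_iff₀ hL, mul_one]; exact ht.2
    · convert h t ht using 1
      field_simp
  obtain ⟨c₀, hc₀S, hc₀⟩ := hpos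
  set c := sSup S with hcdef
  have hcpos : 0 < c := hc₀.trans_le (le_csSup hbdd hc₀S)
  obtain ⟨cs, -, hcs, hcsS⟩ := exists_seq_tendsto_sSup ⟨c₀, hc₀S⟩ hbdd
  choose F hF hF0 hF1 hFL hFsub using hcsS
  obtain ⟨M, hM⟩ := exists_halfSolution_lipschitz (L := L) hw hw0 hq 1
  have hTF : ∀ n, Continuous (halfSolution w q L (F n)) := fun n =>
    continuous_halfSolution hw hw0 hq (hF n)
  have hTF0 : ∀ n, ∀ t ∈ Icc 0 L, 0 ≤ halfSolution w q L (F n) t := fun n t ht =>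
    halfSolution_nonneg hw0 (hF0 n) ht
  have hTFC : ∀ n, ∀ t ∈ Icc 0 L, halfSolution w q L (F n) t ≤ C := fun n =>
    hTC _ (hF n) (hF0 n) (hF1 n)
  obtain ⟨g, hg, φ, hφ, hlim⟩ := exists_subseq_tendsto_of_lipschitz hL.le
    (fun n => hM (F n) (hF n) (hF0 n) (hF1 n)) hTF0 hTFC
  have hcsφ := hcs.comp hφ.tendsto_atTop
  have hg0 : ∀ t ∈ Icc 0 L, 0 ≤ g t := fun t ht =>
    ge_of_tendsto' (hlim t ht) fun n => hTF0 _ t ht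
  have hgL : c ≤ g L := by
    refine le_of_tendsto_of_tendsto' hcsφ (hlim L hLmem) fun n => ?_
    have h := hFsub (φ n) L hLmem
    rwa [hFL, mul_one] at h
  have hgLpos : 0 < g L := hcpos.trans_le hgL
  have hTg : ∀ t ∈ Icc 0 L, c * g t ≤ halfSolution w q L g t := by
    intro t ht
    refine le_of_tendsto_of_tendsto (hcsφ.mul (hlim t ht))
      (tendsto_halfSolution hw hw0 hq (fun n => hTF (φ n))
        (fun n => hTF0 (φ n)) (fun n => hTFC (φ n)) hlim ht) ?_
    have hev : ∀ᶠ n in atTop, 0 < cs (φ n) := hcsφ.eventually (lt_mem_nhds hcpos)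
    filter_upwards [hev] with n hn
    simp only [Function.comp]
    rw [← halfSolution_const_mul hw0 hq hn.le (hF0 (φ n)) ht]
    exact halfSolution_mono hw hw0 hq (continuous_const.mul (hF _)) (hTF _)
      (fun s hs => mul_nonneg hn.le (hF0 _ s hs)) (hFsub (φ n)) ht
  have heq : ∀ t ∈ Icc 0 L, halfSolution w q L g t = c * g t := by
    by_contra! hne
    obtain ⟨t₀, ht₀, hne⟩ := hne
    set u := halfSolution w q L g with hu
    have huc : Continuous u := continuous_halfSolution hw hw0 hq hg
    have hvc : Continuous fun t => c * g t := continuous_const.mul hg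
    have hv0 : ∀ t ∈ Icc 0 L, 0 ≤ c * g t := fun t ht => mul_nonneg hcpos.le (hg0 t ht)
    have hu0 : ∀ t ∈ Icc 0 L, 0 ≤ u t := fun t ht => halfSolution_nonneg hw0 hg0 ht
    have hlt := weightedFlux_zero_lt hw hw0 hq hL hvc huc hv0 hTg
      ⟨t₀, ht₀, lt_of_le_of_ne (hTg t₀ ht₀) hne.symm⟩
    have hcu := continuous_weightedFlux_rpow (L := L) hw hw0 hq huc
    have hcv := continuous_weightedFlux_rpow (L := L) hw hw0 hq hvc
    obtain ⟨ε, hε, hεle⟩ := exists_linear_le_integral hL (hcu.sub hcv)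
      (fun t ht => sub_nonneg.2 (Real.rpow_le_rpow (weightedFlux_nonneg hw0 hv0 ht)
        (weightedFlux_mono hw hw0 hq hvc huc hv0 hTg ht) (by positivity)))
      (sub_pos.2 (Real.rpow_lt_rpow (weightedFlux_nonneg hw0 hv0 (left_mem_Icc.2 hL.le)) hlt
        (by positivity)))
    obtain ⟨K, hK, hKle⟩ := exists_integral_le_linear (L := L)
      (continuous_weightedFlux_rpow (L := L) hw hw0 hq hg)
    have hmem : c + ε / K ∈ S := by
      refine exists_isSubeigen_of_halfSolution hw hw0 hq hg hg0
        ((mul_pos hcpos hgLpos).trans_le (hTg L hLmem)) fun t ht => ?_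
      have h1 := hεle t ht
      simp only [Pi.sub_apply] at h1
      rw [intervalIntegral.integral_sub (hcu.intervalIntegrable _ _)
        (hcv.intervalIntegrable _ _)] at h1
      have h2 := halfSolution_const_mul (q := q) hw0 hq hcpos.le hg0 ht
      have h3 : u t ≤ K * t := by
        have := hKle 0 (left_mem_Icc.2 hL.le) t ht ht.1
        rwa [sub_zero] at this
      have h4 : ε / K * u t ≤ ε * t := by
        rw [div_mul_eq_mul_div, div_le_iff₀ hK]
        nlinarith
      change _ ≤ halfSolution w q L u t
      have h5 : ε * t ≤ halfSolution w q L u t - halfSolution w q L (fun x => c * g x) t := h1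
      rw [h2] at h5
      change (c + ε / K) * u t ≤ _
      have h6 : halfSolution w q L g t = u t := rfl
      rw [h6] at h5
      linarith
    have := le_csSup hbdd hmem
    have : 0 < ε / K := by positivity
    linarith
  refine ⟨c, hcpos, g, hg, fun t ht => ?_, heq⟩
  obtain ⟨ε, hε, h⟩ := exists_linear_le_halfSolution hw hw0 hq hL hg hg0 ⟨L, hLmem, hgLpos⟩
  have h1 := h t (Ioc_subset_Icc_self ht)
  rw [heq t (Ioc_subset_Icc_self ht)] at h1
  exact pos_of_mul_pos_right ((mul_pos hε ht.1).trans_le h1) hcpos.le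

end Eigen

section Hardy

open scoped ENNReal

variable {w γ φ : ℝ → ℝ} {p L ν : ℝ} {h : ℝ → ℝ} {K : NNReal}

theorem abs_le_integral_abs_deriv (hh : LipschitzWith K h) (h0 : h 0 = 0) {t : ℝ} (ht : 0 ≤ t) :
    ENNReal.ofReal |h t| ≤ ∫⁻ s in Ioc 0 t, ENNReal.ofReal |deriv h s| := by
  have hac : AbsolutelyContinuousOnInterval h 0 t :=
    (hh.lipschitzOnWith (s := uIcc 0 t)).absolutelyContinuousOnInterval
  have hint := hac.intervalIntegrable_deriv
  have h1 := hac.integral_deriv_eq_sub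
  rw [h0, sub_zero] at h1
  have h2 : |h t| ≤ ∫ s in (0 : ℝ)..t, |deriv h s| := by
    rw [← h1]
    exact intervalIntegral.abs_integral_le_integral_abs ht
  refine (ENNReal.ofReal_le_ofReal h2).trans_eq ?_
  rw [intervalIntegral.integral_of_le ht, ofReal_integral_eq_lintegral_ofReal hint.1.abs
    (ae_of_all _ fun _ => abs_nonneg _)]

theorem rpow_abs_le_of_lipschitz (hp : 1 < p) (hγ : Continuous γ) (hγ0 : ∀ t ∈ Ico 0 L, 0 < γ t)
    (hφ : ∀ t ∈ Icc 0 L, φ t = ∫ s in (0 : ℝ)..t, γ s) (hh : LipschitzWith K h) (h0 : h 0 = 0)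
    {t : ℝ} (ht : t ∈ Ico 0 L) :
    ENNReal.ofReal (|h t| ^ p) ≤ ENNReal.ofReal (φ t ^ (p - 1)) *
      ∫⁻ s in Ioc 0 t, ENNReal.ofReal (|deriv h s| ^ p * γ s ^ (1 - p)) := by
  have hp0 : 0 < p := by linarith
  have hp1 : 0 < p - 1 := by linarith
  have hpos : ∀ s ∈ Ioc 0 t, 0 < γ s := fun s hs => hγ0 s ⟨hs.1.le, hs.2.trans_lt ht.2⟩
  have hφt : ENNReal.ofReal (φ t) = ∫⁻ s in Ioc 0 t, ENNReal.ofReal (γ s) := by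
    rw [hφ t ⟨ht.1, ht.2.le⟩, intervalIntegral.integral_of_le ht.1,
      ofReal_integral_eq_lintegral_ofReal (hγ.intervalIntegrable 0 t).1]
    exact (ae_restrict_iff' measurableSet_Ioc).2 (ae_of_all _ fun s hs => (hpos s hs).le)
  have hφt0 : 0 ≤ φ t := by
    rw [hφ t ⟨ht.1, ht.2.le⟩]
    exact intervalIntegral.integral_nonneg ht.1 fun s hs => (hγ0 s ⟨hs.1, hs.2.trans_lt ht.2⟩).le
  have hconj : p.HolderConjugate (p / (p - 1)) := Real.HolderConjugate.conjExponent hp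
  have hm1 : Measurable fun s => ENNReal.ofReal (|deriv h s| * γ s ^ (-((p - 1) / p))) := by
    have := measurable_deriv h
    have := hγ.measurable
    fun_prop
  have hm2 : Measurable fun s => ENNReal.ofReal (γ s ^ ((p - 1) / p)) := by
    have := hγ.measurable
    fun_prop
  have hold := ENNReal.lintegral_mul_le_Lp_mul_Lq (volume.restrict (Ioc 0 t)) hconj
    hm1.aemeasurable hm2.aemeasurable
  have e1 : ∫⁻ s in Ioc 0 t, ((fun s => ENNReal.ofReal (|deriv h s| * γ s ^ (-((p - 1) / p)))) *
      fun s => ENNReal.ofReal (γ s ^ ((p - 1) / p))) s =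
      ∫⁻ s in Ioc 0 t, ENNReal.ofReal |deriv h s| := by
    refine setLIntegral_congr_fun measurableSet_Ioc fun s hs => ?_
    have := hpos s hs
    simp only [Pi.mul_apply]
    rw [← ENNReal.ofReal_mul (by positivity), mul_assoc, ← Real.rpow_add this, neg_add_cancel,
      Real.rpow_zero, mul_one]
  have e2 : ∫⁻ s in Ioc 0 t, ENNReal.ofReal (|deriv h s| * γ s ^ (-((p - 1) / p))) ^ p =
      ∫⁻ s in Ioc 0 t, ENNReal.ofReal (|deriv h s| ^ p * γ s ^ (1 - p)) := by
    refine setLIntegral_congr_fun measurableSet_Ioc fun s hs => ?_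
    have := hpos s hs
    rw [ENNReal.ofReal_rpow_of_nonneg (by positivity) hp0.le,
      Real.mul_rpow (abs_nonneg _) (by positivity), ← Real.rpow_mul this.le]
    congr 3
    field_simp
    ring
  have e3 : ∫⁻ s in Ioc 0 t, ENNReal.ofReal (γ s ^ ((p - 1) / p)) ^ (p / (p - 1)) =
      ENNReal.ofReal (φ t) := by
    rw [hφt]
    refine setLIntegral_congr_fun measurableSet_Ioc fun s hs => ?_
    have := hpos s hs
    rw [ENNReal.ofReal_rpow_of_nonneg (by positivity) (by positivity), ← Real.rpow_mul this.le]
    have : (p - 1) / p * (p / (p - 1)) = 1 := by field_simp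
    rw [this, Real.rpow_one]
  rw [e1, e2, e3] at hold
  have hfin := ENNReal.rpow_le_rpow ((abs_le_integral_abs_deriv hh h0 ht.1).trans hold) hp0.le
  rw [ENNReal.mul_rpow_of_nonneg _ _ hp0.le, ← ENNReal.rpow_mul, ← ENNReal.rpow_mul,
    one_div_mul_cancel hp0.ne', ENNReal.rpow_one,
    ENNReal.ofReal_rpow_of_nonneg (abs_nonneg _) hp0.le] at hfin
  have e4 : 1 / (p / (p - 1)) * p = p - 1 := by field_simp
  rw [e4, ENNReal.ofReal_rpow_of_nonneg hφt0 hp1.le, mul_comm] at hfin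
  exact hfin

/-- Weighted Hardy inequality on `[0, L]` whose constant is the eigenvalue of a positive
solution `φ` of the half problem. -/
theorem hardy_le_of_eigenfunction (hp : 1 < p) (hL : 0 < L) (hν : 0 < ν) (hw : Continuous w)
    (hw0 : ∀ x, 0 < w x) (hγ : Continuous γ) (hγ0 : ∀ t ∈ Ico 0 L, 0 < γ t) (hφc : Continuous φ)
    (hφ : ∀ t ∈ Icc 0 L, φ t = ∫ s in (0 : ℝ)..t, γ s)
    (hflux : ∀ s ∈ Icc 0 L, w s * γ s ^ (p - 1) = ν * ∫ x in s..L, w x * φ x ^ (p - 1))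
    (hh : LipschitzWith K h) (h0 : h 0 = 0) :
    ν * ∫ t in (0 : ℝ)..L, |h t| ^ p * w t ≤ ∫ t in (0 : ℝ)..L, |deriv h t| ^ p * w t := by
  have hp0 : 0 < p := by linarith
  have hp1 : 0 < p - 1 := by linarith
  have hφ0 : ∀ t ∈ Icc 0 L, 0 ≤ φ t := by
    intro t ht
    rw [hφ t ht]
    rcases ht.1.eq_or_lt with rfl | ht0
    · simp
    · exact (intervalIntegral.intervalIntegral_pos_of_pos_on (hγ.intervalIntegrable _ _)
        (fun s hs => hγ0 s ⟨hs.1.le, hs.2.trans_le ht.2⟩) ht0).le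
  have hmd := measurable_deriv h
  have hmγ := hγ.measurable
  have hmw := hw.measurable
  have hmφ := hφc.measurable
  set A : ℝ → ℝ≥0∞ := fun s => ENNReal.ofReal (|deriv h s| ^ p * γ s ^ (1 - p)) with hA
  set B : ℝ → ℝ≥0∞ := fun t => ENNReal.ofReal (w t * φ t ^ (p - 1)) with hB
  have hAm : Measurable A := by fun_prop
  have hBm : Measurable B := by fun_prop
  have hset : MeasurableSet {x : ℝ × ℝ | x.2 ≤ x.1} := measurableSet_le measurable_snd measurable_fst
  have key : ENNReal.ofReal ν * ∫⁻ t in Ioo 0 L, ENNReal.ofReal (|h t| ^ p * w t) ≤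
      ∫⁻ s in Ioo 0 L, ENNReal.ofReal (|deriv h s| ^ p * w s) := by
    have s1 : ∫⁻ t in Ioo 0 L, ENNReal.ofReal (|h t| ^ p * w t) ≤
        ∫⁻ t in Ioo 0 L, ∫⁻ s in Ioo 0 L,
          {x : ℝ × ℝ | x.2 ≤ x.1}.indicator (fun x => B x.1 * A x.2) (t, s) := by
      refine setLIntegral_mono' measurableSet_Ioo fun t ht => ?_
      have e : ∫⁻ s in Ioo 0 L,
          {x : ℝ × ℝ | x.2 ≤ x.1}.indicator (fun x => B x.1 * A x.2) (t, s) =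
          B t * ∫⁻ s in Ioc 0 t, A s := by
        have : (fun s => {x : ℝ × ℝ | x.2 ≤ x.1}.indicator (fun x => B x.1 * A x.2) (t, s)) =
            (Iic t).indicator fun s => B t * A s := by
          ext s
          simp only [indicator, mem_ofPred_eq, mem_Iic]
        rw [this, setLIntegral_indicator measurableSet_Iic, lintegral_const_mul _ hAm]
        congr 3
        ext s
        simp only [mem_inter_iff, mem_Iic, mem_Ioo, mem_Ioc]
        exact ⟨fun hs => ⟨hs.2.1, hs.1⟩, fun hs => ⟨hs.2, hs.1, hs.2.trans_lt ht.2⟩⟩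
      rw [e, mul_comm (|h t| ^ p), ENNReal.ofReal_mul (hw0 t).le, hB]
      simp only
      rw [ENNReal.ofReal_mul (hw0 t).le, mul_assoc]
      gcongr
      exact rpow_abs_le_of_lipschitz hp hγ hγ0 hφ hh h0 ⟨ht.1.le, ht.2⟩
    have s2 : ∫⁻ t in Ioo 0 L, ∫⁻ s in Ioo 0 L,
          {x : ℝ × ℝ | x.2 ≤ x.1}.indicator (fun x => B x.1 * A x.2) (t, s) =
        ∫⁻ s in Ioo 0 L, ∫⁻ t in Ioo 0 L,
          {x : ℝ × ℝ | x.2 ≤ x.1}.indicator (fun x => B x.1 * A x.2) (t, s) := by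
      refine lintegral_lintegral_swap ?_
      refine Measurable.aemeasurable ?_
      exact ((hBm.comp measurable_fst).mul (hAm.comp measurable_snd)).indicator hset
    have s3 : ENNReal.ofReal ν * ∫⁻ s in Ioo 0 L, ∫⁻ t in Ioo 0 L,
          {x : ℝ × ℝ | x.2 ≤ x.1}.indicator (fun x => B x.1 * A x.2) (t, s) =
        ∫⁻ s in Ioo 0 L, ENNReal.ofReal (|deriv h s| ^ p * w s) := by
      rw [← lintegral_const_mul' _ _ ENNReal.ofReal_ne_top]
      refine setLIntegral_congr_fun measurableSet_Ioo fun s hs => ?_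
      have e : ∫⁻ t in Ioo 0 L,
          {x : ℝ × ℝ | x.2 ≤ x.1}.indicator (fun x => B x.1 * A x.2) (t, s) =
          (∫⁻ t in Ioc s L, B t) * A s := by
        have : (fun t => {x : ℝ × ℝ | x.2 ≤ x.1}.indicator (fun x => B x.1 * A x.2) (t, s)) =
            (Ici s).indicator fun t => B t * A s := by
          ext t
          simp only [indicator, mem_ofPred_eq, mem_Ici]
        rw [this, setLIntegral_indicator measurableSet_Ici, lintegral_mul_const _ hBm]
        have hI : Ici s ∩ Ioo 0 L = Ico s L := by
          ext t
          simp only [mem_inter_iff, mem_Ici, mem_Ioo, mem_Ico]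
          exact ⟨fun ht => ⟨ht.1, ht.2.2⟩, fun ht => ⟨ht.1, hs.1.trans_le ht.1, ht.2⟩⟩
        rw [hI, setLIntegral_congr Ico_ae_eq_Ioc]
      have hBs : ∫⁻ t in Ioc s L, B t = ENNReal.ofReal (∫ x in s..L, w x * φ x ^ (p - 1)) := by
        rw [intervalIntegral.integral_of_le hs.2.le, ofReal_integral_eq_lintegral_ofReal]
        · exact ((hw.mul (hφc.rpow_const fun _ => Or.inr hp1.le)).intervalIntegrable s L).1
        · refine (ae_restrict_iff' measurableSet_Ioc).2 (ae_of_all _ fun x hx => ?_)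
          exact mul_nonneg (hw0 x).le
            (Real.rpow_nonneg (hφ0 x ⟨hs.1.le.trans hx.1.le, hx.2⟩) _)
      have hγs := hγ0 s ⟨hs.1.le, hs.2⟩
      have hws := hw0 s
      rw [e, hBs, ← mul_assoc, ← ENNReal.ofReal_mul hν.le, ← hflux s ⟨hs.1.le, hs.2.le⟩, hA,
        ← ENNReal.ofReal_mul (by positivity)]
      congr 1
      have : γ s ^ (p - 1) * γ s ^ (1 - p) = 1 := by
        rw [← Real.rpow_add hγs]
        simp
      linear_combination w s * |deriv h s| ^ p * this
    calc _ ≤ _ := mul_le_mul_of_nonneg_left s1 zero_le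
      _ = _ := by rw [s2, s3]
  have hdb : ∀ s, |deriv h s| ≤ K := fun s => norm_deriv_le_of_lipschitz hh
  have i1 : IntegrableOn (fun t => |h t| ^ p * w t) (Ioo 0 L) :=
    (((hh.continuous.abs.rpow_const fun _ => Or.inr hp0.le).mul hw).integrableOn_Icc
      (a := 0) (b := L)).mono_set Ioo_subset_Icc_self
  have i2 : IntegrableOn (fun t => |deriv h t| ^ p * w t) (Ioo 0 L) := by
    refine Integrable.mono' (g := fun t => (K : ℝ) ^ p * w t)
      (((continuous_const.mul hw).integrableOn_Icc
      (a := 0) (b := L)).mono_set Ioo_subset_Icc_self) (by fun_prop) (ae_of_all _ fun t => ?_)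
    have := hw0 t
    rw [Real.norm_of_nonneg (by positivity)]
    gcongr
    exact hdb t
  have nn : ∀ f : ℝ → ℝ, ∀ t, 0 ≤ |f t| ^ p * w t := fun f t => by
    have := hw0 t
    positivity
  rw [intervalIntegral.integral_of_le hL.le, intervalIntegral.integral_of_le hL.le,
    integral_Ioc_eq_integral_Ioo, integral_Ioc_eq_integral_Ioo]
  rw [← ofReal_integral_eq_lintegral_ofReal i1 (ae_of_all _ (nn h)),
    ← ofReal_integral_eq_lintegral_ofReal i2 (ae_of_all _ (nn (deriv h))),
    ← ENNReal.ofReal_mul hν.le, ENNReal.ofReal_le_ofReal_iff (integral_nonneg (nn (deriv h)))]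
    at key
  exact key

end Hardy

section SgnPow

variable {q : ℝ}

theorem sgnPow_of_nonneg (hq : 0 < q) {x : ℝ} (hx : 0 ≤ x) : sgnPow q x = x ^ q := by
  rcases hx.eq_or_lt with rfl | h
  · simp [sgnPow, Real.zero_rpow hq.ne']
  · rw [sgnPow, Real.sign_of_pos h, one_mul, abs_of_pos h]

theorem sgnPow_neg (x : ℝ) : sgnPow q (-x) = -sgnPow q x := by
  simp [sgnPow, Real.sign_neg]

theorem continuous_sgnPow (hq : 0 < q) : Continuous (sgnPow q) := by
  have : sgnPow q = fun x => (max x 0) ^ q - (max (-x) 0) ^ q := by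
    ext x
    rcases le_total 0 x with h | h
    · rw [sgnPow_of_nonneg hq h, max_eq_left h, max_eq_right (by linarith),
        Real.zero_rpow hq.ne', sub_zero]
    · rw [max_eq_right h, max_eq_left (by linarith), Real.zero_rpow hq.ne', zero_sub,
        ← sgnPow_of_nonneg hq (by linarith : 0 ≤ -x), sgnPow_neg, neg_neg]
  rw [this]
  exact ((continuous_id.max continuous_const).rpow_const fun _ => Or.inr hq.le).sub
    ((continuous_neg.max continuous_const).rpow_const fun _ => Or.inr hq.le)

theorem sgnPow_mul_self (hq : 0 < q) (x : ℝ) : sgnPow q x * x = |x| ^ (q + 1) := by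
  rcases eq_or_ne x 0 with rfl | h
  · simp [Real.zero_rpow (by linarith : q + 1 ≠ 0)]
  · rw [Real.rpow_add_one (abs_ne_zero.2 h), sgnPow]
    rcases h.lt_or_gt with h | h
    · rw [Real.sign_of_neg h, abs_of_neg h]; ring
    · rw [Real.sign_of_pos h, abs_of_pos h]; ring

theorem abs_sgnPow_le (x : ℝ) : |sgnPow q x| ≤ |x| ^ q := by
  rw [sgnPow, abs_mul, abs_of_nonneg (Real.rpow_nonneg (abs_nonneg x) q)]
  refine mul_le_of_le_one_left (Real.rpow_nonneg (abs_nonneg x) q) ?_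
  rcases Real.sign_apply_eq x with h | h | h <;> simp [h]

/-- The tangent line inequality for `|·| ^ p`. -/
theorem abs_rpow_sub_le {p : ℝ} (hp : 1 < p) (x c : ℝ) :
    |x| ^ p - p * c * sgnPow (p - 1) x ≤ |x - c| ^ p := by
  have hp0 : 0 < p := by linarith
  have hp1 : 0 < p - 1 := by linarith
  have hconj : p.HolderConjugate (p / (p - 1)) := Real.HolderConjugate.conjExponent hp
  have hy := Real.young_inequality_of_nonneg (abs_nonneg (x - c))
    (Real.rpow_nonneg (abs_nonneg x) (p - 1)) hconj
  have e : (|x| ^ (p - 1)) ^ (p / (p - 1)) = |x| ^ p := by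
    rw [← Real.rpow_mul (abs_nonneg x)]
    congr 1
    field_simp
  rw [e] at hy
  have h1 : sgnPow (p - 1) x * (x - c) ≤ |x - c| * |x| ^ (p - 1) := by
    refine (le_abs_self _).trans ?_
    rw [abs_mul, mul_comm]
    exact mul_le_mul_of_nonneg_left (abs_sgnPow_le x) (abs_nonneg _)
  have h2 := sgnPow_mul_self hp1 x
  rw [sub_add_cancel] at h2
  have h3 : |x| ^ p / (p / (p - 1)) = |x| ^ p * (p - 1) / p := by field_simp
  rw [h3] at hy
  have h4 := mul_le_mul_of_nonneg_left (h1.trans hy) hp0.le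
  have h5 : p * (|x - c| ^ p / p + |x| ^ p * (p - 1) / p) = |x - c| ^ p + |x| ^ p * (p - 1) := by
    field_simp
  rw [h5] at h4
  linear_combination h4 - p * h2

end SgnPow

section OddExtension

variable {w : ℝ → ℝ} {p q L : ℝ}

theorem intervalIntegral_eq_zero_of_odd {f : ℝ → ℝ} (hf : ∀ x, f (-x) = -f x) (a : ℝ) :
    ∫ x in -a..a, f x = 0 := by
  have h := intervalIntegral.integral_comp_neg (a := -a) (b := a) f
  simp only [hf, intervalIntegral.integral_neg, neg_neg] at h
  linarith

theorem intervalIntegral_neg_eq_add {f : ℝ → ℝ} (h1 : IntervalIntegrable f volume (-L) 0)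
    (h2 : IntervalIntegrable f volume 0 L) :
    ∫ x in -L..L, f x = (∫ x in (0 : ℝ)..L, f (-x)) + ∫ x in (0 : ℝ)..L, f x := by
  rw [← intervalIntegral.integral_add_adjacent_intervals h1 h2,
    intervalIntegral.integral_comp_neg, neg_zero]

/-- Odd extension of the positive eigenfunction of the half problem, with its even derivative. -/
theorem exists_odd_eigenpair (hw : Continuous w) (hw0 : ∀ x, 0 < w x) (hq : 0 < q)
    (hL : 0 < L) : ∃ ν > 0, ∃ φ γ : ℝ → ℝ, (∀ t, HasDerivAt φ (γ t) t) ∧ Continuous γ ∧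
      (∀ t, γ (-t) = γ t) ∧ (∀ t, φ (-t) = -φ t) ∧ (∀ t, φ t = ∫ s in (0 : ℝ)..t, γ s) ∧
      (∀ t ∈ Ioc 0 L, 0 < φ t) ∧ (∀ t ∈ Ico 0 L, 0 < γ t) ∧ γ L = 0 ∧
      ∀ s ∈ Icc 0 L, w s * γ s ^ q = ν * ∫ x in s..L, w x * φ x ^ q := by
  obtain ⟨c, hc, g, hg, hgpos, heq⟩ := exists_halfSolution_eigenfunction hw hw0 hq hL
  have hg0 : ∀ t ∈ Icc 0 L, 0 ≤ g t := by
    intro t ht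
    rcases ht.1.eq_or_lt with rfl | h
    · have h := heq 0 ht
      simp only [halfSolution, intervalIntegral.integral_same] at h
      exact nonneg_of_mul_nonneg_right h.le hc
    · exact (hgpos t ⟨h, ht.2⟩).le
  have hfl := continuous_weightedFlux_rpow (L := L) hw hw0 hq hg
  set γ : ℝ → ℝ := fun s => c⁻¹ * weightedFlux w q L g (min |s| L) ^ (1 / q) with hγdef
  have hγ : Continuous γ := continuous_const.mul (hfl.comp (by fun_prop))
  have hγs : ∀ s ∈ Icc 0 L, γ s = c⁻¹ * weightedFlux w q L g s ^ (1 / q) := fun s hs => by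
    simp only [hγdef, abs_of_nonneg hs.1, min_eq_left hs.2]
  have hγe : ∀ t, γ (-t) = γ t := fun t => by simp only [hγdef, abs_neg]
  set φ : ℝ → ℝ := fun t => ∫ s in (0 : ℝ)..t, γ s with hφdef
  have hφg : ∀ t ∈ Icc 0 L, φ t = g t := by
    intro t ht
    have h1 : φ t = ∫ s in (0 : ℝ)..t, c⁻¹ * weightedFlux w q L g s ^ (1 / q) := by
      refine intervalIntegral.integral_congr fun s hs => ?_
      rw [uIcc_of_le ht.1] at hs
      exact hγs s ⟨hs.1, hs.2.trans ht.2⟩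
    rw [h1, intervalIntegral.integral_const_mul]
    change c⁻¹ * halfSolution w q L g t = g t
    rw [heq t ht, inv_mul_cancel_left₀ hc.ne']
  refine ⟨(c⁻¹) ^ q, by positivity, φ, γ, fun t => (hγ.integral_hasStrictDerivAt 0 t).hasDerivAt,
    hγ, hγe, fun t => ?_, fun _ => rfl, fun t ht => ?_, fun t ht => ?_, ?_, fun s hs => ?_⟩
  · have h := intervalIntegral.integral_comp_neg (a := 0) (b := t) γ
    simp only [hγe, neg_zero] at h
    simp only [hφdef]
    rw [h, intervalIntegral.integral_symm]
  · rw [hφg t (Ioc_subset_Icc_self ht)]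
    exact hgpos t ht
  · rw [hγs t (Ico_subset_Icc_self ht)]
    refine mul_pos (inv_pos.2 hc) (Real.rpow_pos_of_pos (mul_pos (inv_pos.2 (hw0 t)) ?_) _)
    refine intervalIntegral.intervalIntegral_pos_of_pos_on
      ((hw.mul (hg.rpow_const fun _ => Or.inr hq.le)).intervalIntegrable _ _) (fun x hx => ?_) ht.2
    exact mul_pos (hw0 x) (Real.rpow_pos_of_pos (hgpos x ⟨ht.1.trans_lt hx.1, hx.2.le⟩) _)
  · rw [hγs L (right_mem_Icc.2 hL.le)]
    simp [weightedFlux, hq.ne']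
  · have h0 := weightedFlux_nonneg (q := q) hw0 hg0 hs
    rw [hγs s hs, Real.mul_rpow (inv_nonneg.2 hc.le) (Real.rpow_nonneg h0 _), ← Real.rpow_mul h0,
      one_div_mul_cancel hq.ne', Real.rpow_one, mul_left_comm]
    congr 1
    rw [weightedFlux, mul_inv_cancel_left₀ (hw0 s).ne']
    refine intervalIntegral.integral_congr fun x hx => ?_
    rw [uIcc_of_le hs.2] at hx
    simp only [hφg x ⟨hs.1.trans hx.1, hx.2⟩]

/-- The Rayleigh quotient of an admissible function is bounded below by a constant for which
the half-interval Hardy inequality holds. -/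
theorem rayleigh_le_of_hardy (hp : 1 < p) (hL : 0 < L) {ν : ℝ} (hν : 0 < ν) (hw : Continuous w)
    (hw0 : ∀ x, 0 < w x) (hwe : ∀ x, w (-x) = w x)
    (hardy : ∀ (K : NNReal) (h : ℝ → ℝ), LipschitzWith K h → h 0 = 0 →
      ν * ∫ t in (0 : ℝ)..L, |h t| ^ p * w t ≤ ∫ t in (0 : ℝ)..L, |deriv h t| ^ p * w t)
    {f : ℝ → ℝ} {K : NNReal} (hf : LipschitzOnWith K f (Icc (-L) L))
    (hmean : ∫ s in -L..L, sgnPow (p - 1) (f s) * w s = 0) :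
    ν * ∫ s in -L..L, |f s| ^ p * w s ≤ ∫ s in -L..L, |deriv f s| ^ p * w s := by
  have hp0 : 0 < p := by linarith
  have hp1 : 0 < p - 1 := by linarith
  have hLL : -L ≤ L := by linarith
  obtain ⟨F, hF, hfF⟩ := hf.extend_real
  have hFc := hF.continuous
  have hcongr : ∀ G : ℝ → ℝ, ∫ s in -L..L, G (f s) * w s = ∫ s in -L..L, G (F s) * w s := by
    intro G
    refine intervalIntegral.integral_congr fun s hs => ?_
    rw [uIcc_of_le hLL] at hs
    simp only [hfF hs]
  have hderiv : ∫ s in -L..L, |deriv f s| ^ p * w s = ∫ s in -L..L, |deriv F s| ^ p * w s := by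
    rw [intervalIntegral.integral_of_le hLL, intervalIntegral.integral_of_le hLL,
      integral_Ioc_eq_integral_Ioo, integral_Ioc_eq_integral_Ioo]
    refine setIntegral_congr_fun measurableSet_Ioo fun s hs => ?_
    have : f =ᶠ[𝓝 s] F := hfF.eventuallyEq_of_mem (Icc_mem_nhds hs.1 hs.2)
    simp only [this.deriv_eq]
  rw [hcongr (sgnPow (p - 1))] at hmean
  rw [hcongr fun x => |x| ^ p, hderiv]
  set h : ℝ → ℝ := fun s => F s - F 0 with hh
  have hhlip : LipschitzWith K h := by
    refine LipschitzWith.of_dist_le_mul fun x y => ?_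
    simpa [hh, dist_sub_right] using hF.dist_le_mul x y
  have hhc := hhlip.continuous
  have hdh : ∀ s, deriv h s = deriv F s := fun s => deriv_sub_const (F 0)
  have hcomp : ∫ s in -L..L, |F s| ^ p * w s ≤ ∫ s in -L..L, |h s| ^ p * w s := by
    have cp : ∀ u : ℝ → ℝ, Continuous u → Continuous fun s => |u s| ^ p * w s := fun u hu =>
      (hu.abs.rpow_const fun _ => Or.inr hp0.le).mul hw
    have c2 : Continuous fun s => p * F 0 * (sgnPow (p - 1) (F s) * w s) :=
      continuous_const.mul (((continuous_sgnPow hp1).comp hFc).mul hw)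
    have hm := intervalIntegral.integral_mono_on (μ := volume) hLL
      (((cp F hFc).sub c2).intervalIntegrable _ _) ((cp h hhc).intervalIntegrable _ _)
      fun s _ => (by
        have := mul_le_mul_of_nonneg_right (abs_rpow_sub_le hp (F s) (F 0)) (hw0 s).le
        simp only [Pi.sub_apply, hh]
        linarith)
    simp only [Pi.sub_apply] at hm
    rw [intervalIntegral.integral_sub ((cp F hFc).intervalIntegrable _ _)
      (c2.intervalIntegrable _ _), intervalIntegral.integral_const_mul, hmean, mul_zero,
      sub_zero] at hm
    exact hm
  refine (mul_le_mul_of_nonneg_left hcomp hν.le).trans ?_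
  have i1 : ∀ a b, IntervalIntegrable (fun s => |h s| ^ p * w s) volume a b := fun a b =>
    ((hhc.abs.rpow_const fun _ => Or.inr hp0.le).mul hw).intervalIntegrable a b
  have i2 : ∀ a b, IntervalIntegrable (fun s => |deriv F s| ^ p * w s) volume a b := fun a b => by
    have hm := measurable_deriv F
    have hmw := hw.measurable
    refine ((continuous_const (y := (K : ℝ) ^ p)).mul hw).intervalIntegrable a b |>.mono_fun
      (by fun_prop) (ae_of_all _ fun t => ?_)
    have := hw0 t
    change ‖|deriv F t| ^ p * w t‖ ≤ ‖(K : ℝ) ^ p * w t‖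
    rw [Real.norm_of_nonneg (by positivity), Real.norm_of_nonneg (by positivity)]
    gcongr
    exact norm_deriv_le_of_lipschitz hF
  rw [intervalIntegral_neg_eq_add (i1 _ _) (i1 _ _), intervalIntegral_neg_eq_add (i2 _ _) (i2 _ _),
    mul_add]
  have h1 := hardy K h hhlip (by simp [hh])
  have h2 := hardy K (fun s => h (-s))
    (LipschitzWith.of_dist_le_mul fun x y => by simpa using hhlip.dist_le_mul (-x) (-y))
    (by simp [hh])
  simp only [deriv_comp_neg, abs_neg, hdh] at h1 h2
  simp only [hwe]
  exact add_le_add h2 h1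

end OddExtension

/-- **Existence of an odd, increasing eigenfunction realizing `μ_p(κ, D)`.**
There exists an odd `C¹` function `φ` on `[-D/2, D/2]` (with continuous derivative `g`),
not identically zero, such that:
(i) `t ↦ e^{-κ t²/2} |φ'|^{p-2} φ'` is differentiable on `(-D/2, D/2)` with derivative
    `-μ_p(κ,D) e^{-κ t²/2} |φ|^{p-2} φ`;
(ii) `φ 0 = 0`, `φ > 0` on `(0, D/2]`, `φ' > 0` on `(0, D/2)`, and `φ'(D/2) = 0`;
(iii) `φ` is admissible for the infimum defining `μ_p(κ,D)` and its Rayleigh quotient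
      equals `μ_p(κ,D)`. -/
theorem exists_odd_eigenfunction_rayleighNeumann (p κ D : ℝ) (hp : 1 < p) (hD : 0 < D) :
    ∃ φ g : ℝ → ℝ,
      -- φ is C¹ on [-D/2, D/2] with derivative g
      (∀ t ∈ Set.Icc (-(D / 2)) (D / 2), HasDerivAt φ (g t) t) ∧
      ContinuousOn g (Set.Icc (-(D / 2)) (D / 2)) ∧
      -- φ is odd
      (∀ t ∈ Set.Icc (-(D / 2)) (D / 2), φ (-t) = -φ t) ∧
      -- not identically zero
      ¬ (∀ s ∈ Set.Icc (-(D / 2)) (D / 2), φ s = 0) ∧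
      -- (i) the ODE in divergence form on the open interval
      (∀ t ∈ Set.Ioo (-(D / 2)) (D / 2),
        HasDerivAt (fun s => Real.exp (-κ * s ^ 2 / 2) * sgnPow (p - 1) (g s))
          (-(rayleighNeumann p κ D) * (Real.exp (-κ * t ^ 2 / 2) * sgnPow (p - 1) (φ t))) t) ∧
      -- (ii) sign and monotonicity properties
      φ 0 = 0 ∧
      (∀ t ∈ Set.Ioc (0 : ℝ) (D / 2), 0 < φ t) ∧
      (∀ t ∈ Set.Ioo (0 : ℝ) (D / 2), 0 < g t) ∧
      g (D / 2) = 0 ∧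
      -- (iii) admissibility and attainment of the infimum
      (∃ K : NNReal, LipschitzOnWith K φ (Set.Icc (-(D / 2)) (D / 2))) ∧
      (∫ s in (-(D / 2))..(D / 2), sgnPow (p - 1) (φ s) * Real.exp (-κ * s ^ 2 / 2)) = 0 ∧
      (∫ s in (-(D / 2))..(D / 2), |deriv φ s| ^ p * Real.exp (-κ * s ^ 2 / 2)) /
        (∫ s in (-(D / 2))..(D / 2), |φ s| ^ p * Real.exp (-κ * s ^ 2 / 2))
        = rayleighNeumann p κ D := by
  have hp0 : 0 < p := by linarith
  have hp1 : 0 < p - 1 := by linarith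
  set L := D / 2 with hLdef
  have hL : 0 < L := by positivity
  have hLL : -L ≤ L := by linarith
  set w : ℝ → ℝ := fun s => Real.exp (-κ * s ^ 2 / 2) with hwdef
  have hw : Continuous w := by fun_prop
  have hw0 : ∀ x, 0 < w x := fun x => Real.exp_pos _
  have hwe : ∀ x, w (-x) = w x := fun x => by simp only [hwdef, neg_sq]
  obtain ⟨ν, hν, φ, γ, hφd, hγ, hγe, hφo, hφi, hφpos, hγpos, hγL, hflux⟩ :=
    exists_odd_eigenpair hw hw0 hp1 hL
  have hφc : Continuous φ := continuous_iff_continuousAt.2 fun t => (hφd t).continuousAt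
  have hφ0 : φ 0 = 0 := by rw [hφi, intervalIntegral.integral_same]
  have hγ0 : ∀ t ∈ Icc 0 L, 0 ≤ γ t := fun t ht => by
    rcases ht.2.eq_or_lt with rfl | h
    · exact hγL.ge
    · exact (hγpos t ⟨ht.1, h⟩).le
  have hφ0' : ∀ t ∈ Icc 0 L, 0 ≤ φ t := fun t ht => by
    rcases ht.1.eq_or_lt with rfl | h
    · exact hφ0.ge
    · exact (hφpos t ⟨h, ht.2⟩).le
  set ψ : ℝ → ℝ := fun s => w s * sgnPow (p - 1) (φ s) with hψdef
  have hψc : Continuous ψ := hw.mul ((continuous_sgnPow hp1).comp hφc)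
  have hψo : ∀ s, ψ (-s) = -ψ s := fun s => by
    simp only [hψdef, hwe, hφo, sgnPow_neg, mul_neg]
  have hψi : ∀ a b, IntervalIntegrable ψ volume a b := fun a b => hψc.intervalIntegrable a b
  have hfluxpos : ∀ s ∈ Icc 0 L, w s * sgnPow (p - 1) (γ s) = ν * ∫ x in s..L, ψ x := by
    intro s hs
    rw [sgnPow_of_nonneg hp1 (hγ0 s hs), hflux s hs]
    congr 1
    refine intervalIntegral.integral_congr fun x hx => ?_
    rw [uIcc_of_le hs.2] at hx
    simp only [hψdef, sgnPow_of_nonneg hp1 (hφ0' x ⟨hs.1.trans hx.1, hx.2⟩)]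
  have hZ : ∀ s ∈ Icc (-L) L, w s * sgnPow (p - 1) (γ s) = ν * ∫ x in s..L, ψ x := by
    intro s hs
    rcases le_total 0 s with h | h
    · exact hfluxpos s ⟨h, hs.2⟩
    · have h1 := hfluxpos (-s) ⟨by linarith, by linarith [hs.1]⟩
      have h2 := intervalIntegral_eq_zero_of_odd hψo (-s)
      rw [neg_neg] at h2
      rw [hwe, hγe] at h1
      rw [h1, ← intervalIntegral.integral_add_adjacent_intervals (hψi s (-s)) (hψi (-s) L), h2,
        zero_add]
  have hZd : ∀ t, HasDerivAt (fun s => ν * ∫ x in s..L, ψ x) (-ν * ψ t) t := by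
    intro t
    have h := ((hψc.integral_hasStrictDerivAt L t).hasDerivAt.neg).const_mul ν
    have e : (fun s => ν * ∫ x in s..L, ψ x) = fun s => ν * (-fun u => ∫ x in L..u, ψ x) s := by
      ext s
      rw [intervalIntegral.integral_symm, Pi.neg_apply]
    rw [e]
    exact h.congr_deriv (by ring)
  obtain ⟨K, hK⟩ : ∃ K : NNReal, LipschitzOnWith K φ (Icc (-L) L) := by
    obtain ⟨C, hC⟩ := (isCompact_Icc (a := -L) (b := L)).exists_bound_of_continuousOn
      hγ.continuousOn
    refine ⟨C.toNNReal, (convex_Icc (-L) L).lipschitzOnWith_of_nnnorm_hasDerivWithin_le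
      (fun t _ => (hφd t).hasDerivWithinAt) fun t ht => ?_⟩
    rw [← NNReal.coe_le_coe, coe_nnnorm]
    exact (hC t ht).trans (Real.le_coe_toNNReal C)
  have hmean : ∫ s in -L..L, sgnPow (p - 1) (φ s) * w s = 0 :=
    intervalIntegral_eq_zero_of_odd (fun s => by rw [hφo, sgnPow_neg, hwe, neg_mul]) L
  have hne : ¬ ∀ s ∈ Icc (-L) L, φ s = 0 := fun h =>
    (hφpos L ⟨hL, le_rfl⟩).ne' (h L ⟨hLL, le_rfl⟩)
  have hden : ∀ f : ℝ → ℝ, ContinuousOn f (Icc (-L) L) → (¬ ∀ s ∈ Icc (-L) L, f s = 0) →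
      0 < ∫ s in -L..L, |f s| ^ p * w s := by
    intro f hf hf0
    push Not at hf0
    obtain ⟨s, hs, hfs⟩ := hf0
    refine intervalIntegral.integral_pos (by linarith)
      ((hf.abs.rpow_const fun _ _ => Or.inr hp0.le).mul hw.continuousOn)
      (fun x _ => mul_nonneg (by positivity) (hw0 x).le) ⟨s, hs, ?_⟩
    exact mul_pos (Real.rpow_pos_of_pos (abs_pos.2 hfs) _) (hw0 s)
  have henergy : ∫ s in -L..L, |deriv φ s| ^ p * w s = ν * ∫ s in -L..L, |φ s| ^ p * w s := by
    have hd : ∀ s ∈ uIcc (-L) L, HasDerivAt (fun s => (ν * ∫ x in s..L, ψ x) * φ s)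
        (|γ s| ^ p * w s - ν * (|φ s| ^ p * w s)) s := by
      intro s hs
      rw [uIcc_of_le hLL] at hs
      refine ((hZd s).mul (hφd s)).congr_deriv ?_
      have h1 := sgnPow_mul_self hp1 (γ s)
      have h2 := sgnPow_mul_self hp1 (φ s)
      rw [sub_add_cancel] at h1 h2
      rw [← hZ s hs, ← h1, ← h2]
      ring
    have c1 : Continuous fun s => |γ s| ^ p * w s :=
      (hγ.abs.rpow_const fun _ => Or.inr hp0.le).mul hw
    have c2 : Continuous fun s => ν * (|φ s| ^ p * w s) :=
      continuous_const.mul ((hφc.abs.rpow_const fun _ => Or.inr hp0.le).mul hw)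
    have h := intervalIntegral.integral_eq_sub_of_hasDerivAt hd
      ((c1.sub c2).intervalIntegrable _ _)
    rw [intervalIntegral.integral_sub (c1.intervalIntegrable _ _) (c2.intervalIntegrable _ _),
      intervalIntegral.integral_const_mul, intervalIntegral.integral_same,
      intervalIntegral_eq_zero_of_odd hψo] at h
    simp only [fun s => (hφd s).deriv]
    linarith
  have hquot : (∫ s in -L..L, |deriv φ s| ^ p * w s) / (∫ s in -L..L, |φ s| ^ p * w s) = ν := by
    rw [henergy, mul_div_assoc, div_self (hden φ hφc.continuousOn hne).ne', mul_one]
  have hray : rayleighNeumann p κ D = ν := by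
    refine IsLeast.csInf_eq ⟨⟨φ, ⟨K, hK⟩, hne, hmean, hquot.symm⟩, ?_⟩
    rintro r ⟨f, ⟨K', hf⟩, hf0, hfm, rfl⟩
    rw [le_div_iff₀ (hden f hf.continuousOn hf0)]
    refine rayleigh_le_of_hardy hp hL hν hw hw0 hwe (fun K h hh h0 => ?_) hf hfm
    exact hardy_le_of_eigenfunction hp hL hν hw hw0 hγ hγpos hφc (fun t _ => hφi t) hflux hh h0
  refine ⟨φ, γ, fun t _ => hφd t, hγ.continuousOn, fun t _ => hφo t, hne, fun t ht => ?_, hφ0,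
    hφpos, fun t ht => hγpos t (Ioo_subset_Ico_self ht), hγL, ⟨K, hK⟩, hmean, hquot.trans hray.symm⟩
  rw [hray]
  refine (hZd t).congr_of_eventuallyEq ?_
  filter_upwards [Icc_mem_nhds ht.1 ht.2] with s hs
  exact hZ s hs
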